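/- arXiv:1705.09027 — 11 statements merged into one kernel-verified Lean document; each statement's English description precedes it below -/
import Mathlib

section
/- For every finite dimension d and every d×d density matrix ρ that is coherent (i.e., has at least one nonzero off-diagonal entry), there exists a Hermitian d×d complex matrix W such that tr(Wρ) ≠ 0 and tr(W D) = 0 for every incoherent (diagonal) density matrix D. -/
open scoped ComplexOrder

/-- A d×d density matrix: positive semidefinite with trace 1. -/
def IsDensityMatrix {d : ℕ} (ρ : Matrix (Fin d) (Fin d) ℂ) : Prop :=
  ρ.PosSemidef ∧ ρ.trace = 1

/-- Incoherent: diagonal in the fixed computational basis. -/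
def IsIncoherent {d : ℕ} (ρ : Matrix (Fin d) (Fin d) ℂ) : Prop :=
  ∀ i j, i ≠ j → ρ i j = 0

/-!
The witness is the off-diagonal part `W` of `ρ`. It has zero diagonal, so it is orthogonal to all
diagonal matrices for the trace pairing, in particular to `ρ - W`. Hence
`tr (W ρ) = tr (W W) = tr (Wᴴ W)` is the squared Frobenius norm of `W`, which vanishes only if
`ρ` is diagonal.
-/

section OffDiagonal

open Matrix

variable {n R : Type*}

/-- The off-diagonal part of a square matrix, obtained by subtracting its diagonal part. For a
Hermitian matrix it serves as the coherence witness. -/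
def offDiagPart [DecidableEq n] [AddGroup R] (A : Matrix n n R) : Matrix n n R :=
  A - diagonal A.diag

theorem diag_offDiagPart [DecidableEq n] [AddGroup R] (A : Matrix n n R) :
    (offDiagPart A).diag = 0 := by
  rw [offDiagPart, diag_sub, diag_diagonal, sub_self]

theorem offDiagPart_eq_zero_iff [DecidableEq n] [AddGroup R] {A : Matrix n n R} :
    offDiagPart A = 0 ↔ A.IsDiag := by
  rw [offDiagPart, sub_eq_zero, eq_comm, isDiag_iff_diagonal_diag]

theorem isHermitian_offDiagPart [DecidableEq n] [AddGroup R] [StarAddMonoid R]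
    {A : Matrix n n R} (hA : A.IsHermitian) : (offDiagPart A).IsHermitian :=
  hA.sub (isHermitian_diagonal_iff.2 fun i => hA.apply i i)

theorem trace_mul_diagonal [Fintype n] [DecidableEq n] [NonUnitalNonAssocSemiring R]
    (A : Matrix n n R) (v : n → R) : (A * diagonal v).trace = A.diag ⬝ᵥ v := by
  simp only [trace, dotProduct, diag_apply, mul_diagonal]

theorem trace_offDiagPart_mul_of_isDiag [Fintype n] [DecidableEq n] [NonUnitalNonAssocRing R]
    (A : Matrix n n R) {D : Matrix n n R} (hD : D.IsDiag) : (offDiagPart A * D).trace = 0 := by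
  rw [← hD.diagonal_diag, trace_mul_diagonal, diag_offDiagPart, zero_dotProduct]

theorem trace_offDiagPart_mul_offDiagPart [Fintype n] [DecidableEq n] [NonUnitalNonAssocRing R]
    (A B : Matrix n n R) : (offDiagPart A * offDiagPart B).trace = (offDiagPart A * B).trace := by
  rw [offDiagPart.eq_def B, mul_sub, trace_sub,
    trace_offDiagPart_mul_of_isDiag A (isDiag_diagonal B.diag), sub_zero]

variable [Fintype n] [NonUnitalRing R] [PartialOrder R] [StarRing R] [StarOrderedRing R]
  [NoZeroDivisors R] {A : Matrix n n R}

theorem trace_offDiagPart_mul_self_eq_zero_iff [DecidableEq n] (hA : A.IsHermitian) :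
    (offDiagPart A * A).trace = 0 ↔ A.IsDiag := by
  have trace_eq : (offDiagPart A * A).trace = ((offDiagPart A)ᴴ * offDiagPart A).trace := by
    rw [(isHermitian_offDiagPart hA).eq, trace_offDiagPart_mul_offDiagPart]
  rw [trace_eq, trace_conjTranspose_mul_self_eq_zero_iff, offDiagPart_eq_zero_iff]

theorem exists_stringent_coherence_witness_general (hA : A.IsHermitian) (hcoh : ¬A.IsDiag) :
    ∃ W : Matrix n n R, W.IsHermitian ∧ (W * A).trace ≠ 0 ∧
      ∀ D : Matrix n n R, D.IsDiag → (W * D).trace = 0 := by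
  classical
  exact ⟨offDiagPart A, isHermitian_offDiagPart hA,
    (trace_offDiagPart_mul_self_eq_zero_iff hA).not.2 hcoh,
    fun _ hD => trace_offDiagPart_mul_of_isDiag A hD⟩

end OffDiagonal

/-- For every finite dimension `d` and every coherent density matrix `ρ`
(i.e. one with a nonzero off-diagonal entry), there exists a Hermitian
matrix `W` with `tr (W ρ) ≠ 0` while `tr (W D) = 0` for every incoherent
density matrix `D`. -/
theorem exists_stringent_coherence_witness (d : ℕ)
    (ρ : Matrix (Fin d) (Fin d) ℂ) (hρ : IsDensityMatrix ρ)
    (hcoh : ∃ i j, i ≠ j ∧ ρ i j ≠ 0) :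
    ∃ W : Matrix (Fin d) (Fin d) ℂ, W.IsHermitian ∧
      (W * ρ).trace ≠ 0 ∧
      ∀ D : Matrix (Fin d) (Fin d) ℂ,
        IsDensityMatrix D → IsIncoherent D → (W * D).trace = 0 := by
  obtain ⟨i, j, hij, hρij⟩ := hcoh
  obtain ⟨W, hW, hWρ, hWD⟩ :=
    exists_stringent_coherence_witness_general hρ.1.isHermitian fun hdiag => hρij (hdiag hij)
  exact ⟨W, hW, hWρ, fun D _ hD => hWD D fun i j => hD i j⟩
end

section
/- For every d×d density matrix ρ, the l1-norm of coherence satisfies C_{l1}(ρ) ≤ d − 1. -/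
open scoped ComplexOrder

/-- The `l₁`-norm of coherence: the sum of the moduli of the off-diagonal
entries. -/
noncomputable def Cl1 {d : ℕ} (ρ : Matrix (Fin d) (Fin d) ℂ) : ℝ :=
  ∑ i, ∑ j, if i = j then 0 else ‖ρ i j‖

/-!
Nonnegativity of the `2 × 2` principal minors and AM-GM bound `2 |ρ i j|` by `ρ i i + ρ j j`.
In the sum over ordered pairs `i ≠ j`, each diagonal entry occurs `2 (d - 1)` times.
-/

theorem sum_sum_offDiag_add {n R : Type*} [Fintype n] [DecidableEq n] [CommRing R] (f : n → R) :
    ∑ i, ∑ j, (if i = j then 0 else f i + f j) = 2 * ((Fintype.card n - 1) * ∑ i, f i) := by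
  have ite_eq_sub (i j : n) :
      (if i = j then 0 else f i + f j) = f i + f j - if i = j then 2 * f i else 0 := by
    split_ifs with hij
    · rw [hij]; ring
    · rw [sub_zero]
  simp only [ite_eq_sub, Finset.sum_sub_distrib, Finset.sum_add_distrib, Finset.sum_const,
    Finset.sum_ite_eq, Finset.mem_univ, if_true, Finset.card_univ, nsmul_eq_mul,
    ← Finset.mul_sum]
  ring

section PosSemidef

variable {n 𝕜 : Type*} [RCLike 𝕜] {A : Matrix n n 𝕜}

theorem norm_apply_sq_le_of_posSemidef (hA : A.PosSemidef) (i j : n) :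
    ‖A i j‖ ^ 2 ≤ RCLike.re (A i i) * RCLike.re (A j j) := by
  have minor_nonneg : 0 ≤ A i i * A j j - A i j * A j i := by
    simpa only [Matrix.det_fin_two, Matrix.submatrix_apply, Matrix.cons_val_zero,
      Matrix.cons_val_one] using (hA.submatrix ![i, j]).det_nonneg
  have minor_eq : A i i * A j j - A i j * A j i =
      ((RCLike.re (A i i) * RCLike.re (A j j) - ‖A i j‖ ^ 2 : ℝ) : 𝕜) := by
    rw [← hA.isHermitian.apply j i, RCLike.star_def, RCLike.mul_conj, RCLike.ofReal_sub,
      RCLike.ofReal_mul, RCLike.ofReal_pow, hA.isHermitian.coe_re_apply_self,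
      hA.isHermitian.coe_re_apply_self]
  rw [minor_eq, RCLike.ofReal_nonneg] at minor_nonneg
  exact sub_nonneg.mp minor_nonneg

theorem two_mul_norm_apply_le_of_posSemidef (hA : A.PosSemidef) (i j : n) :
    2 * ‖A i j‖ ≤ RCLike.re (A i i) + RCLike.re (A j j) :=
  have re_diag_nonneg (k : n) : 0 ≤ RCLike.re (A k k) := (RCLike.nonneg_iff.mp hA.diag_nonneg).1
  two_mul_le_add_of_sq_le_mul (re_diag_nonneg i) (re_diag_nonneg j)
    (norm_apply_sq_le_of_posSemidef hA i j)

theorem Cl1_le_dim_sub_one_general [Fintype n] [DecidableEq n] (hA : A.PosSemidef) :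
    ∑ i, ∑ j, (if i = j then 0 else ‖A i j‖) ≤ (Fintype.card n - 1) * RCLike.re A.trace := by
  refine le_of_mul_le_mul_left ?_ (two_pos (α := ℝ))
  calc 2 * ∑ i, ∑ j, (if i = j then 0 else ‖A i j‖)
      = ∑ i, ∑ j, (if i = j then 0 else 2 * ‖A i j‖) := by
        simp only [Finset.mul_sum, mul_ite, mul_zero]
    _ ≤ ∑ i, ∑ j, (if i = j then 0 else RCLike.re (A i i) + RCLike.re (A j j)) := by
        gcongr with i _ j _
        split_ifs
        · exact le_rfl
        · exact two_mul_norm_apply_le_of_posSemidef hA i j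
    _ = 2 * ((Fintype.card n - 1) * ∑ i, RCLike.re (A i i)) := sum_sum_offDiag_add _
    _ = 2 * ((Fintype.card n - 1) * RCLike.re A.trace) := by
        simp only [Matrix.trace, Matrix.diag_apply, map_sum]

end PosSemidef

/-- For every d×d density matrix `ρ`, the l₁-norm of coherence satisfies
`C_{l1}(ρ) ≤ d − 1`. -/
theorem Cl1_le_dim_sub_one (d : ℕ)
    (ρ : Matrix (Fin d) (Fin d) ℂ) (hρ : IsDensityMatrix ρ) :
    Cl1 ρ ≤ (d : ℝ) - 1 := by
  simpa [Cl1, hρ.2] using Cl1_le_dim_sub_one_general hρ.1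
end

section
/- For every normalized coherence witness W and every d×d density matrix ρ, the (real) mean value tr(Wρ) satisfies tr(Wρ) ≤ d − 1. -/
open scoped ComplexOrder

/-- A normalized coherence witness: Hermitian, all diagonal entries zero, and
all off-diagonal entries of modulus 1. -/
def IsNormalizedWitness {d : ℕ} (W : Matrix (Fin d) (Fin d) ℂ) : Prop :=
  W.IsHermitian ∧ (∀ i, W i i = 0) ∧ ∀ i j, i ≠ j → ‖W i j‖ = 1

/-!
The `2 × 2` principal minors of a positive semidefinite `ρ` are nonnegative, so by AM-GM
`‖ρ i j‖ ≤ (ρ i i + ρ j j) / 2`, and summing over all `i, j` gives `∑ ‖ρ i j‖ ≤ d tr ρ`.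
All entries of `W + 1` have norm at most `1`, hence `tr (W ρ) + tr ρ = tr ((W + 1) ρ) ≤ d tr ρ`.
-/

section

variable {m n R : Type*} [Fintype m] [Fintype n] [NonUnitalSeminormedRing R]

theorem norm_trace_mul_le_sum_norm {V : Matrix m n R} (hV : ∀ i j, ‖V i j‖ ≤ 1)
    (A : Matrix n m R) : ‖(V * A).trace‖ ≤ ∑ i, ∑ j, ‖A j i‖ := by
  refine norm_sum_le_of_le _ fun i _ => norm_sum_le_of_le _ fun j _ => ?_
  calc ‖V i j * A j i‖ ≤ ‖V i j‖ * ‖A j i‖ := norm_mul_le _ _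
    _ ≤ ‖A j i‖ := mul_le_of_le_one_left (norm_nonneg _) (hV i j)

end

section

open RCLike

variable {n 𝕜 : Type*} [RCLike 𝕜] {A : Matrix n n 𝕜}

theorem norm_apply_sq_le_mul_diag_of_posSemidef (hA : A.PosSemidef) (i j : n) :
    ‖A i j‖ ^ 2 ≤ re (A i i) * re (A j j) := by
  have minor_nonneg : 0 ≤ A i i * A j j - A i j * A j i :=
    Matrix.det_fin_two (A.submatrix ![i, j] ![i, j]) ▸ (hA.submatrix ![i, j]).det_nonneg
  have off_diag_mul : A i j * A j i = (‖A i j‖ ^ 2 : ℝ) := by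
    rw [← hA.isHermitian.apply j i, star_def, mul_conj, ofReal_pow]
  have diag_im : im (A i i) = 0 := (nonneg_iff.1 hA.diag_nonneg).2
  have re_minor_nonneg := (nonneg_iff.1 minor_nonneg).1
  rw [off_diag_mul, map_sub, mul_re, diag_im, ofReal_re] at re_minor_nonneg
  linarith

theorem norm_apply_le_half_add_diag_of_posSemidef (hA : A.PosSemidef) (i j : n) :
    ‖A i j‖ ≤ (re (A i i) + re (A j j)) / 2 := by
  have diag_re_nonneg (k : n) : 0 ≤ re (A k k) := (nonneg_iff.1 hA.diag_nonneg).1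
  refine le_of_sq_le_sq ?_ (by linarith [diag_re_nonneg i, diag_re_nonneg j])
  calc ‖A i j‖ ^ 2 ≤ re (A i i) * re (A j j) := norm_apply_sq_le_mul_diag_of_posSemidef hA i j
    _ ≤ ((re (A i i) + re (A j j)) / 2) ^ 2 := by
      linarith [four_mul_le_sq_add (re (A i i)) (re (A j j))]

variable [Fintype n]

theorem sum_norm_apply_le_card_mul_trace_of_posSemidef (hA : A.PosSemidef) :
    ∑ i, ∑ j, ‖A j i‖ ≤ Fintype.card n * re A.trace := by
  have re_trace : ∑ i, re (A i i) = re A.trace := (map_sum re _ _).symm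
  calc ∑ i, ∑ j, ‖A j i‖ ≤ ∑ i, ∑ j, (re (A j j) + re (A i i)) / 2 := by
        gcongr
        exact norm_apply_le_half_add_diag_of_posSemidef hA _ _
    _ = Fintype.card n * re A.trace := by
        simp only [← Finset.sum_div, Finset.sum_add_distrib, Finset.sum_const, Finset.card_univ,
          nsmul_eq_mul, ← Finset.mul_sum, re_trace]
        ring

theorem witness_mean_value_le_dim_sub_one_general (hA : A.PosSemidef) {W : Matrix n n 𝕜}
    (hdiag : ∀ i, W i i = 0) (hoff : ∀ i j, i ≠ j → ‖W i j‖ ≤ 1) :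
    re (W * A).trace ≤ (Fintype.card n - 1) * re A.trace := by
  classical
  have norm_add_one_le (i j : n) : ‖(W + 1) i j‖ ≤ 1 := by
    obtain rfl | hij := eq_or_ne i j
    · simp [hdiag]
    · simpa [hij] using hoff i j hij
  have shifted_le : re ((W + 1) * A).trace ≤ Fintype.card n * re A.trace :=
    calc re ((W + 1) * A).trace ≤ ‖((W + 1) * A).trace‖ := re_le_norm _
      _ ≤ ∑ i, ∑ j, ‖A j i‖ := norm_trace_mul_le_sum_norm norm_add_one_le A
      _ ≤ Fintype.card n * re A.trace := sum_norm_apply_le_card_mul_trace_of_posSemidef hA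
  rw [add_mul, one_mul, Matrix.trace_add, map_add] at shifted_le
  linarith

end

/-- For every normalized coherence witness `W` and every d×d density matrix
`ρ`, the (real) mean value `tr (W ρ)` satisfies `tr (W ρ) ≤ d − 1`. -/
theorem witness_mean_value_le_dim_sub_one (d : ℕ)
    (W : Matrix (Fin d) (Fin d) ℂ) (hW : IsNormalizedWitness W)
    (ρ : Matrix (Fin d) (Fin d) ℂ) (hρ : IsDensityMatrix ρ) :
    ((W * ρ).trace).re ≤ (d : ℝ) - 1 := by
  simpa [hρ.2] using witness_mean_value_le_dim_sub_one_general hρ.1 hW.2.1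
    fun i j hij => (hW.2.2 i j hij).le
end

section
/- If W is a normalized coherence witness and ρ is a d×d density matrix with tr(Wρ) = d − 1, then ρ is a maximally coherent pure state: there exists a unit vector v ∈ ℂ^d with |v_j| = 1/√d for every j such that ρ = v v†; in particular ρ_{jj} = 1/d for all j and |ρ_{jk}| = 1/d for all j ≠ k. -/
open scoped ComplexOrder

/-!
Put `U = 1 + W`, so that `tr (U ρ) = d` and every entry of `U` has modulus at most `1`.
Positivity of `ρ` at `x = e_j - conj (U j k) e_k` gives
`2 Re (U j k * ρ k j) ≤ ρ j j + ρ k k`. Summed over `j` and `k` this reads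
`Re (tr (U ρ)) ≤ d tr ρ`, so here all these bounds are sharp. Then `x` is isotropic for `ρ`, hence
in its kernel, so any two columns of `ρ` are proportional with ratio the conjugate of an entry
of `U`. Thus `ρ = ρ i i • u u†` with `u` the `i`-th column of `U`; as the entries of `u` have
modulus at most `1`, no diagonal entry of `ρ` exceeds another one, so the diagonal is constant and
`|u j| = 1`.
-/

section

open Matrix

variable {n R : Type*}

theorem star_dotProduct_mulVec_single_sub_smul_single [Fintype n] [DecidableEq n]
    [CommRing R] [StarRing R] (ρ : Matrix n n R) (j k : n) (c : R) :
    star (Pi.single j 1 - star c • Pi.single k 1) ⬝ᵥ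
        (ρ *ᵥ (Pi.single j 1 - star c • Pi.single k 1)) =
      ρ j j + c * star c * ρ k k - (c * ρ k j + star c * ρ j k) := by
  simp only [star_sub, star_smul, star_star, Pi.star_single, star_one, sub_dotProduct,
    smul_dotProduct, single_one_dotProduct, mulVec_sub, mulVec_smul, mulVec_single_one,
    Pi.sub_apply, Pi.smul_apply, col_apply, smul_eq_mul]
  ring

theorem sum_mul_apply_add_star_mul_apply [Fintype n] [CommSemiring R] [StarRing R]
    {ρ : Matrix n n R} (hρ : ρ.IsHermitian) (U : Matrix n n R) :
    ∑ j, ∑ k, (U j k * ρ k j + star (U j k) * ρ j k) = (U * ρ).trace + star (U * ρ).trace := by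
  have star_entry j k : star (U j k) * ρ j k = star (U j k * ρ k j) := by
    rw [star_mul', hρ.apply]
  simp only [star_entry, trace, diag_apply, mul_apply, Finset.sum_add_distrib, star_sum]

theorem sum_apply_self_add_apply_self [Fintype n] [Semiring R] (ρ : Matrix n n R) :
    ∑ j, ∑ k, (ρ j j + ρ k k) = 2 * (Fintype.card n * ρ.trace) := by
  simp [trace, Finset.sum_add_distrib, Finset.mul_sum, two_mul]

theorem apply_eq_apply_self_mul_of_apply_eq_star_mul_apply [CommSemiring R] [StarRing R]
    {ρ U : Matrix n n R} (hρ : ρ.IsHermitian)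
    (hcol : ∀ i j k, ρ i j = star (U j k) * ρ i k) (i j k : n) :
    ρ j k = ρ i i * (U j i * star (U k i)) := by
  have base_column : ρ j i = U j i * ρ i i := by
    rw [← hρ.apply j i, hcol i j i, star_mul', star_star, hρ.apply]
  rw [hcol j k i, base_column]
  ring

theorem apply_self_eq_trace_div_card [Fintype n] [Field R] [CharZero R] {ρ : Matrix n n R}
    (hconst : ∀ i j, ρ i i = ρ j j) (i : n) :
    ρ i i = ρ.trace / Fintype.card n := by
  have : Nonempty n := ⟨i⟩
  have trace_eq : ρ.trace = Fintype.card n * ρ i i := by simp [trace, hconst _ i]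
  rw [trace_eq, mul_div_cancel_left₀]
  exact_mod_cast Fintype.card_ne_zero

variable {𝕜 : Type*} [RCLike 𝕜] {ρ U : Matrix n n 𝕜}

theorem mul_star_self_le_one {c : 𝕜} (hc : ‖c‖ ≤ 1) : c * star c ≤ 1 := by
  rw [RCLike.star_def, RCLike.mul_conj]
  exact_mod_cast pow_le_one₀ (norm_nonneg c) hc

theorem norm_eq_one_of_mul_star_self_eq_one {c : 𝕜} (hc : c * star c = 1) : ‖c‖ = 1 := by
  rw [RCLike.star_def, RCLike.mul_conj] at hc
  exact (pow_eq_one_iff_of_nonneg (norm_nonneg c) two_ne_zero).1 (by exact_mod_cast hc)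

theorem norm_one_add_apply_le_one [DecidableEq n] {W : Matrix n n 𝕜} (hdiag : ∀ i, W i i = 0)
    (hoff : ∀ i j, i ≠ j → ‖W i j‖ ≤ 1) (i j : n) : ‖(1 + W) i j‖ ≤ 1 := by
  obtain rfl | hij := eq_or_ne i j
  · simp [hdiag]
  · simpa [hij] using hoff i j hij

theorem star_dotProduct_mulVec_single_sub_smul_single_le [Fintype n] [DecidableEq n]
    (hρ : ρ.PosSemidef) (j k : n) {c : 𝕜} (hc : ‖c‖ ≤ 1) :
    star (Pi.single j 1 - star c • Pi.single k 1) ⬝ᵥ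
        (ρ *ᵥ (Pi.single j 1 - star c • Pi.single k 1)) ≤
      ρ j j + ρ k k - (c * ρ k j + star c * ρ j k) := by
  rw [star_dotProduct_mulVec_single_sub_smul_single]
  gcongr
  exact mul_le_of_le_one_left hρ.diag_nonneg (mul_star_self_le_one hc)

theorem mul_apply_add_star_mul_apply_le [Finite n] (hρ : ρ.PosSemidef) (j k : n) {c : 𝕜}
    (hc : ‖c‖ ≤ 1) : c * ρ k j + star c * ρ j k ≤ ρ j j + ρ k k := by
  classical
  have := Fintype.ofFinite n
  exact sub_nonneg.1 <| (hρ.dotProduct_mulVec_nonneg _).trans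
    (star_dotProduct_mulVec_single_sub_smul_single_le hρ j k hc)

theorem apply_eq_star_mul_apply_of_mul_apply_add_star_mul_apply_eq [Finite n]
    (hρ : ρ.PosSemidef) {j k : n} {c : 𝕜} (hc : ‖c‖ ≤ 1)
    (heq : c * ρ k j + star c * ρ j k = ρ j j + ρ k k) (i : n) : ρ i j = star c * ρ i k := by
  classical
  have := Fintype.ofFinite n
  have isotropic := (star_dotProduct_mulVec_single_sub_smul_single_le hρ j k hc).trans_eq
    (sub_eq_zero.2 heq.symm)
  have mem_ker := (hρ.dotProduct_mulVec_zero_iff _).1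
    (isotropic.antisymm (hρ.dotProduct_mulVec_nonneg _))
  simpa [mulVec_sub, mulVec_smul, sub_eq_zero] using congrFun mem_ker i

theorem apply_eq_star_mul_apply_of_trace_mul_eq [Fintype n] (hρ : ρ.PosSemidef)
    (hU : ∀ j k, ‖U j k‖ ≤ 1) (htr : (U * ρ).trace = Fintype.card n * ρ.trace) (i j k : n) :
    ρ i j = star (U j k) * ρ i k := by
  have bound j k := mul_apply_add_star_mul_apply_le hρ j k (hU j k)
  have sum_eq : ∑ j, ∑ k, (U j k * ρ k j + star (U j k) * ρ j k) = ∑ j, ∑ k, (ρ j j + ρ k k) := by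
    rw [sum_mul_apply_add_star_mul_apply hρ.isHermitian, htr, sum_apply_self_add_apply_self,
      star_mul', star_natCast, (IsSelfAdjoint.of_nonneg hρ.trace_nonneg).star_eq, two_mul]
  have row_eq := (Finset.sum_eq_sum_iff_of_le fun j _ => Finset.sum_le_sum fun k _ => bound j k).1
    sum_eq j (Finset.mem_univ j)
  have entry_eq := (Finset.sum_eq_sum_iff_of_le fun k _ => bound j k).1 row_eq k (Finset.mem_univ k)
  exact apply_eq_star_mul_apply_of_mul_apply_add_star_mul_apply_eq hρ (hU j k) entry_eq i

theorem apply_self_eq_apply_self_of_apply_eq_apply_self_mul (hρ : ρ.PosSemidef)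
    (hU : ∀ j k, ‖U j k‖ ≤ 1) (hfactor : ∀ i j k, ρ j k = ρ i i * (U j i * star (U k i)))
    (i j : n) : ρ i i = ρ j j := by
  have diag_le i j : ρ j j ≤ ρ i i :=
    (hfactor i j j).trans_le <|
      mul_le_of_le_one_right hρ.diag_nonneg (mul_star_self_le_one (hU j i))
  exact (diag_le j i).antisymm (diag_le i j)

theorem exists_eq_vecMulVec_of_trace_mul_eq_card [Fintype n] (hρ : ρ.PosSemidef)
    (htrace : ρ.trace = 1) (hU : ∀ j k, ‖U j k‖ ≤ 1) (htr : (U * ρ).trace = Fintype.card n) :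
    ∃ v : n → 𝕜, (∀ j, ‖v j‖ = 1 / √(Fintype.card n)) ∧ ρ = vecMulVec v (star v) := by
  have factor := apply_eq_apply_self_mul_of_apply_eq_star_mul_apply hρ.isHermitian
    (apply_eq_star_mul_apply_of_trace_mul_eq hρ hU (by rw [htr, htrace, mul_one]))
  have diag_const := apply_self_eq_apply_self_of_apply_eq_apply_self_mul hρ hU factor
  obtain ⟨i, -, hi⟩ : ∃ i ∈ Finset.univ, ρ i i ≠ 0 :=
    Finset.exists_ne_zero_of_sum_ne_zero (htrace.trans_ne one_ne_zero)
  have norm_eq_one j : ‖U j i‖ = 1 := norm_eq_one_of_mul_star_self_eq_one <|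
    mul_left_cancel₀ hi <| by rw [← factor, mul_one, diag_const]
  refine ⟨fun j => U j i / (√(Fintype.card n) : ℝ), fun j => by simp [norm_eq_one], ?_⟩
  have sqrt_mul_sqrt :
      ((√(Fintype.card n) : ℝ) : 𝕜) * (√(Fintype.card n) : ℝ) = Fintype.card n := by
    exact_mod_cast Real.mul_self_sqrt (Nat.cast_nonneg _)
  ext j k
  rw [factor i j k, apply_self_eq_trace_div_card diag_const, htrace, vecMulVec_apply,
    Pi.star_apply, star_div₀, RCLike.star_def, RCLike.conj_ofReal,
    div_mul_div_comm, sqrt_mul_sqrt, one_div_mul_eq_div]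

theorem maximally_coherent_of_witness_mean_value_eq_general [Fintype n] {W : Matrix n n 𝕜}
    (hdiag : ∀ i, W i i = 0) (hoff : ∀ i j, i ≠ j → ‖W i j‖ ≤ 1) (hρ : ρ.PosSemidef)
    (htrace : ρ.trace = 1) (hmean : (W * ρ).trace = Fintype.card n - 1) :
    ∃ v : n → 𝕜,
      (∀ j, ‖v j‖ = 1 / √(Fintype.card n)) ∧
      (∀ j k, ρ j k = v j * starRingEnd 𝕜 (v k)) ∧
      (∀ j, ρ j j = 1 / (Fintype.card n : 𝕜)) ∧
      (∀ j k, j ≠ k → ‖ρ j k‖ = 1 / (Fintype.card n : ℝ)) := by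
  classical
  have trace_one_add : ((1 + W) * ρ).trace = Fintype.card n := by
    rw [add_mul, one_mul, trace_add, htrace, hmean, add_sub_cancel]
  obtain ⟨v, norm_v, rfl⟩ := exists_eq_vecMulVec_of_trace_mul_eq_card hρ htrace
    (norm_one_add_apply_le_one hdiag hoff) trace_one_add
  refine ⟨v, norm_v, fun j k => rfl, fun j => ?_, fun j k _ => ?_⟩
  · rw [vecMulVec_apply, Pi.star_apply, RCLike.star_def, RCLike.mul_conj, norm_v,
      ← RCLike.ofReal_pow, div_pow, one_pow, Real.sq_sqrt (Nat.cast_nonneg _),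
      RCLike.ofReal_div, RCLike.ofReal_one, RCLike.ofReal_natCast]
  · rw [vecMulVec_apply, norm_mul, Pi.star_apply, norm_star, norm_v, norm_v,
      one_div_mul_one_div, Real.mul_self_sqrt (Nat.cast_nonneg _)]

end

/-- If `W` is a normalized coherence witness and `ρ` is a density matrix with
`tr (W ρ) = d − 1`, then `ρ` is a maximally coherent pure state: `ρ = v v†`
for a vector `v` all of whose components have modulus `1/√d`; in particular
`ρ_{jj} = 1/d` and `|ρ_{jk}| = 1/d` for `j ≠ k`. -/
theorem maximally_coherent_of_witness_mean_value_eq (d : ℕ)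
    (W : Matrix (Fin d) (Fin d) ℂ) (hW : IsNormalizedWitness W)
    (ρ : Matrix (Fin d) (Fin d) ℂ) (hρ : IsDensityMatrix ρ)
    (hmean : (W * ρ).trace = (d : ℂ) - 1) :
    ∃ v : Fin d → ℂ,
      (∀ j, ‖v j‖ = 1 / Real.sqrt d) ∧
      (∀ j k, ρ j k = v j * starRingEnd ℂ (v k)) ∧
      (∀ j, ρ j j = 1 / (d : ℂ)) ∧
      (∀ j k, j ≠ k → ‖ρ j k‖ = 1 / (d : ℝ)) := by
  simpa using maximally_coherent_of_witness_mean_value_eq_general hW.2.1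
    (fun i j hij => (hW.2.2 i j hij).le) hρ.1 hρ.2 (by simpa using hmean)
end

section
/- For every normalized coherence witness W and every d×d density matrix ρ, the l1-norm of coherence is bounded below by the modulus of the mean value of W: C_{l1}(ρ) ≥ |tr(Wρ)|. -/
open scoped ComplexOrder

theorem norm_trace_mul_le {m n R : Type*} [Fintype m] [Fintype n] [NonUnitalSeminormedRing R]
    (A : Matrix m n R) (B : Matrix n m R) :
    ‖(A * B).trace‖ ≤ ∑ i, ∑ j, ‖A i j‖ * ‖B j i‖ :=
  calc ‖(A * B).trace‖ = ‖∑ i, ∑ j, A i j * B j i‖ := rfl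
    _ ≤ ∑ i, ∑ j, ‖A i j * B j i‖ := norm_sum_le_of_le _ fun _ _ => norm_sum_le _ _
    _ ≤ ∑ i, ∑ j, ‖A i j‖ * ‖B j i‖ := by gcongr; exact norm_mul_le _ _

theorem Cl1_ge_abs_witness_mean_value_general {d : ℕ} {W : Matrix (Fin d) (Fin d) ℂ}
    (hdiag : ∀ i, W i i = 0) (hoff : ∀ i j, i ≠ j → ‖W i j‖ ≤ 1)
    (ρ : Matrix (Fin d) (Fin d) ℂ) :
    ‖(W * ρ).trace‖ ≤ Cl1 ρ := by
  have entry_le (i j : Fin d) : ‖ρ i j‖ * ‖W j i‖ ≤ if i = j then 0 else ‖ρ i j‖ := by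
    split_ifs with hij
    · simp [hij, hdiag]
    · exact mul_le_of_le_one_right (norm_nonneg _) (hoff j i (Ne.symm hij))
  calc ‖(W * ρ).trace‖ = ‖(ρ * W).trace‖ := by rw [Matrix.trace_mul_comm]
    _ ≤ ∑ i, ∑ j, ‖ρ i j‖ * ‖W j i‖ := norm_trace_mul_le ρ W
    _ ≤ Cl1 ρ := Finset.sum_le_sum fun i _ => Finset.sum_le_sum fun j _ => entry_le i j

/-- For every normalized coherence witness `W` and every density matrix `ρ`,
the l₁-norm of coherence is bounded below by the modulus of the mean value of
`W`: `C_{l1}(ρ) ≥ |tr (W ρ)|`. -/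
theorem Cl1_ge_abs_witness_mean_value (d : ℕ)
    (W : Matrix (Fin d) (Fin d) ℂ) (hW : IsNormalizedWitness W)
    (ρ : Matrix (Fin d) (Fin d) ℂ) (hρ : IsDensityMatrix ρ) :
    ‖(W * ρ).trace‖ ≤ Cl1 ρ :=
  Cl1_ge_abs_witness_mean_value_general hW.2.1 (fun i j hij => (hW.2.2 i j hij).le) ρ
end

section
/- For every d×d density matrix ρ, the witnessed coherence, defined as the supremum of tr(Wρ) over all normalized coherence witnesses W, equals the l1-norm of coherence C_{l1}(ρ), and the supremum is attained by some normalized coherence witness. -/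
open scoped ComplexOrder

/-!
Since `W` vanishes on the diagonal and has unimodular entries off it, the triangle inequality bounds
`‖tr (W ρ)‖` by the sum of the off-diagonal moduli of `ρ`. For equality, let `W i j` be the phase of
`ρ i j`: each off-diagonal term of `tr (W ρᴴ)` is then `‖ρ i j‖`, and `W` inherits Hermitian
symmetry from `ρ` because taking the phase commutes with conjugation.
-/

section UnitPhase

variable {𝕜 : Type*} [RCLike 𝕜]

/-- The phase `z / ‖z‖` of a scalar. The value at `0` is set to `1`, so that the phase always has
modulus `1` and still commutes with conjugation. -/
noncomputable def unitPhase (z : 𝕜) : 𝕜 :=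
  if z = 0 then 1 else z / (‖z‖ : 𝕜)

theorem norm_unitPhase (z : 𝕜) : ‖unitPhase z‖ = 1 := by
  by_cases hz : z = 0 <;> simp [unitPhase, hz]

theorem unitPhase_star (z : 𝕜) : unitPhase (star z) = star (unitPhase z) := by
  by_cases hz : z = 0 <;> simp [unitPhase, hz]

theorem unitPhase_mul_star (z : 𝕜) : unitPhase z * star z = (‖z‖ : 𝕜) := by
  by_cases hz : z = 0
  · simp [hz]
  · have norm_ne_zero : (‖z‖ : 𝕜) ≠ 0 := by simpa using hz
    rw [unitPhase, if_neg hz, div_mul_eq_mul_div, div_eq_iff norm_ne_zero, RCLike.star_def,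
      RCLike.mul_conj, sq]

end UnitPhase

section PhaseMatrix

variable {n 𝕜 : Type*} [DecidableEq n] [RCLike 𝕜]

/-- The matrix of phases of the off-diagonal entries of `A`, with zero diagonal. For Hermitian `A`
it is the coherence witness at which the supremum is attained. -/
noncomputable def phaseMatrix (A : Matrix n n 𝕜) : Matrix n n 𝕜 :=
  Matrix.of fun i j => if i = j then 0 else unitPhase (A i j)

theorem phaseMatrix_apply_self (A : Matrix n n 𝕜) (i : n) : phaseMatrix A i i = 0 := by
  simp [phaseMatrix]

theorem phaseMatrix_apply_of_ne (A : Matrix n n 𝕜) {i j : n} (hij : i ≠ j) :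
    phaseMatrix A i j = unitPhase (A i j) := by
  simp [phaseMatrix, hij]

theorem phaseMatrix_conjTranspose (A : Matrix n n 𝕜) :
    phaseMatrix A.conjTranspose = (phaseMatrix A).conjTranspose := by
  ext i j
  rw [Matrix.conjTranspose_apply]
  obtain rfl | hij := eq_or_ne i j
  · rw [phaseMatrix_apply_self, phaseMatrix_apply_self, star_zero]
  · rw [phaseMatrix_apply_of_ne _ hij, phaseMatrix_apply_of_ne _ hij.symm,
      Matrix.conjTranspose_apply, unitPhase_star]

theorem isHermitian_phaseMatrix {A : Matrix n n 𝕜} (hA : A.IsHermitian) :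
    (phaseMatrix A).IsHermitian := by
  rw [Matrix.IsHermitian, ← phaseMatrix_conjTranspose, hA.eq]

end PhaseMatrix

section Coherence

variable {d : ℕ}

theorem isNormalizedWitness_phaseMatrix {ρ : Matrix (Fin d) (Fin d) ℂ} (hρ : ρ.IsHermitian) :
    IsNormalizedWitness (phaseMatrix ρ) :=
  ⟨isHermitian_phaseMatrix hρ, phaseMatrix_apply_self ρ, fun i j hij => by
    rw [phaseMatrix_apply_of_ne ρ hij, norm_unitPhase]⟩

theorem trace_phaseMatrix_mul_conjTranspose (ρ : Matrix (Fin d) (Fin d) ℂ) :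
    (phaseMatrix ρ * ρ.conjTranspose).trace = (Cl1 ρ : ℂ) := by
  simp only [Matrix.trace, Matrix.diag_apply, Matrix.mul_apply, Matrix.conjTranspose_apply, Cl1,
    Complex.ofReal_sum]
  refine Finset.sum_congr rfl fun i _ => Finset.sum_congr rfl fun j _ => ?_
  obtain rfl | hij := eq_or_ne i j
  · simp [phaseMatrix_apply_self]
  · rw [phaseMatrix_apply_of_ne ρ hij, if_neg hij]
    exact unitPhase_mul_star (ρ i j)

theorem norm_trace_mul_le_Cl1 {W : Matrix (Fin d) (Fin d) ℂ} (ρ : Matrix (Fin d) (Fin d) ℂ)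
    (W_diag : ∀ i, W i i = 0) (W_offDiag : ∀ i j, i ≠ j → ‖W i j‖ ≤ 1) :
    ‖(W * ρ).trace‖ ≤ Cl1 ρ := by
  rw [Matrix.trace_mul_comm]
  simp only [Matrix.trace, Matrix.diag_apply, Matrix.mul_apply, Cl1]
  refine norm_sum_le_of_le _ fun i _ => norm_sum_le_of_le _ fun j _ => ?_
  obtain rfl | hij := eq_or_ne i j
  · simp [W_diag]
  · rw [norm_mul, if_neg hij]
    exact mul_le_of_le_one_right (norm_nonneg _) (W_offDiag j i hij.symm)

theorem witnessed_coherence_eq_Cl1_general {ρ : Matrix (Fin d) (Fin d) ℂ} (hρ : ρ.IsHermitian) :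
    IsGreatest
      {x : ℝ | ∃ W : Matrix (Fin d) (Fin d) ℂ,
        IsNormalizedWitness W ∧ (W * ρ).trace = (x : ℂ)}
      (Cl1 ρ) := by
  constructor
  · have trace_eq := trace_phaseMatrix_mul_conjTranspose ρ
    rw [hρ.eq] at trace_eq
    exact ⟨phaseMatrix ρ, isNormalizedWitness_phaseMatrix hρ, trace_eq⟩
  · rintro x ⟨W, ⟨-, W_diag, W_offDiag⟩, trace_eq⟩
    calc
      x ≤ ‖(x : ℂ)‖ := (le_abs_self x).trans_eq (Complex.norm_real x).symm
      _ = ‖(W * ρ).trace‖ := by rw [trace_eq]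
      _ ≤ Cl1 ρ := norm_trace_mul_le_Cl1 ρ W_diag fun i j hij => (W_offDiag i j hij).le

end Coherence

/-- The witnessed coherence, i.e. the supremum of the mean values `tr (W ρ)`
over all normalized coherence witnesses `W`, equals the l₁-norm of coherence
`C_{l1}(ρ)`, and it is attained by some normalized witness.  This is stated
as: `C_{l1}(ρ)` is the greatest element of the set of attainable mean
values. -/
theorem witnessed_coherence_eq_Cl1 (d : ℕ)
    (ρ : Matrix (Fin d) (Fin d) ℂ) (hρ : IsDensityMatrix ρ) :
    IsGreatest
      {x : ℝ | ∃ W : Matrix (Fin d) (Fin d) ℂ,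
        IsNormalizedWitness W ∧ (W * ρ).trace = (x : ℂ)}
      (Cl1 ρ) :=
  witnessed_coherence_eq_Cl1_general hρ.1.isHermitian
end

section
/- For every d×d density matrix ρ, the supremum of tr(Wρ) over all normalized coherence witnesses W equals 0 if and only if ρ is incoherent (diagonal). -/
open scoped ComplexOrder

/-!
Since `W` vanishes on the diagonal, `tr (W ρ) = ∑_{i ≠ j} W i j * ρ j i`, so
`|tr (W ρ)| ≤ ∑_{i ≠ j} ‖ρ i j‖` by the triangle inequality. For Hermitian `ρ` the matrix of
phases of the off-diagonal entries of `ρ` is itself a witness and attains this bound. Hence the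
supremum is the `ℓ₁`-norm of the off-diagonal part of `ρ`.
-/

section Phase

variable {𝕜 : Type*} [RCLike 𝕜]

open Classical in
/-- The phase `z / ‖z‖` of a scalar, with the phase of `0` taken to be `1` so that every phase
has modulus `1`. -/
noncomputable def phase (z : 𝕜) : 𝕜 :=
  if z = 0 then 1 else z / (‖z‖ : 𝕜)

theorem norm_phase (z : 𝕜) : ‖phase z‖ = 1 := by
  unfold phase
  split_ifs with hz
  · exact norm_one
  · rw [norm_div, RCLike.norm_coe_norm, div_self (norm_ne_zero_iff.mpr hz)]

theorem star_phase (z : 𝕜) : star (phase z) = phase (star z) := by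
  by_cases hz : z = 0 <;> simp [phase, hz]

theorem phase_mul_star (z : 𝕜) : phase z * star z = (‖z‖ : 𝕜) := by
  by_cases hz : z = 0
  · simp [hz]
  · have hnorm : (‖z‖ : 𝕜) ≠ 0 := by simpa using hz
    rw [phase, if_neg hz, div_mul_eq_mul_div, div_eq_iff hnorm, ← sq]
    exact RCLike.mul_conj z

end Phase

section OffDiagonal

variable {n : Type*} [Fintype n]

theorem trace_mul_eq_sum_offDiag {R : Type*} [NonUnitalNonAssocSemiring R] {W : Matrix n n R}
    (hW : ∀ i, W i i = 0) (A : Matrix n n R) :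
    (W * A).trace = ∑ p ∈ Finset.univ.offDiag, W p.1 p.2 * A p.2 p.1 := by
  classical
  have hdiag : ∑ p ∈ Finset.univ.diag, W p.1 p.2 * A p.2 p.1 = 0 := by
    simp [Finset.sum_diag, hW]
  calc (W * A).trace = ∑ p ∈ Finset.univ ×ˢ Finset.univ, W p.1 p.2 * A p.2 p.1 := by
        simp only [Matrix.trace, Matrix.diag_apply, Matrix.mul_apply, Finset.sum_product]
    _ = ∑ p ∈ Finset.univ.offDiag, W p.1 p.2 * A p.2 p.1 := by
        rw [← Finset.diag_union_offDiag, Finset.sum_union (Finset.disjoint_diag_offDiag _),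
          hdiag, zero_add]

/-- The `ℓ₁`-norm of coherence: the sum of the moduli of the off-diagonal entries. -/
def l1Coherence {E : Type*} [Norm E] (A : Matrix n n E) : ℝ :=
  ∑ p ∈ Finset.univ.offDiag, ‖A p.1 p.2‖

theorem l1Coherence_eq_zero_iff {E : Type*} [NormedAddGroup E] {A : Matrix n n E} :
    l1Coherence A = 0 ↔ A.IsDiag := by
  rw [l1Coherence, Finset.sum_eq_zero_iff_of_nonneg fun _ _ => norm_nonneg _]
  simp [Matrix.IsDiag, Pairwise]

theorem l1Coherence_transpose {E : Type*} [Norm E] (A : Matrix n n E) :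
    l1Coherence A.transpose = l1Coherence A :=
  Finset.sum_equiv (Equiv.prodComm n n) (by simp [eq_comm]) (by simp)

theorem norm_trace_mul_le_l1Coherence {R : Type*} [NonUnitalSeminormedRing R]
    {W : Matrix n n R} (hdiag : ∀ i, W i i = 0) (hoff : ∀ i j, i ≠ j → ‖W i j‖ ≤ 1)
    (A : Matrix n n R) : ‖(W * A).trace‖ ≤ l1Coherence A := by
  rw [trace_mul_eq_sum_offDiag hdiag, ← l1Coherence_transpose]
  refine norm_sum_le_of_le _ fun p hp => ?_
  have hne : p.1 ≠ p.2 := (Finset.mem_offDiag.mp hp).2.2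
  calc ‖W p.1 p.2 * A p.2 p.1‖ ≤ ‖W p.1 p.2‖ * ‖A p.2 p.1‖ := norm_mul_le _ _
    _ ≤ ‖A p.2 p.1‖ := mul_le_of_le_one_left (norm_nonneg _) (hoff _ _ hne)

end OffDiagonal

section Witness

variable {n 𝕜 : Type*} [RCLike 𝕜]

/-- Normalized coherence witnesses over an arbitrary index type and over `ℝ` or `ℂ`; for
`Matrix (Fin d) (Fin d) ℂ` this unfolds to `IsNormalizedWitness`. -/
def IsUnimodularWitness (W : Matrix n n 𝕜) : Prop :=
  W.IsHermitian ∧ (∀ i, W i i = 0) ∧ ∀ i j, i ≠ j → ‖W i j‖ = 1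

/-- The matrix of phases of the off-diagonal entries of `A`, with zero diagonal: the witness
that detects the coherence of a Hermitian `A` best. -/
noncomputable def phaseWitness [DecidableEq n] (A : Matrix n n 𝕜) : Matrix n n 𝕜 :=
  Matrix.of fun i j => if i = j then 0 else phase (A i j)

theorem phaseWitness_apply_self [DecidableEq n] (A : Matrix n n 𝕜) (i : n) :
    phaseWitness A i i = 0 := by
  simp [phaseWitness]

theorem phaseWitness_apply_of_ne [DecidableEq n] (A : Matrix n n 𝕜) {i j : n} (hij : i ≠ j) :
    phaseWitness A i j = phase (A i j) := by
  simp [phaseWitness, hij]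

theorem isUnimodularWitness_phaseWitness [DecidableEq n] {A : Matrix n n 𝕜}
    (hA : A.IsHermitian) : IsUnimodularWitness (phaseWitness A) := by
  refine ⟨Matrix.IsHermitian.ext fun i j => ?_, phaseWitness_apply_self A, fun i j hij => ?_⟩
  · obtain rfl | hij := eq_or_ne i j
    · rw [phaseWitness_apply_self, star_zero]
    · rw [phaseWitness_apply_of_ne A hij, phaseWitness_apply_of_ne A hij.symm, star_phase,
        hA.apply]
  · rw [phaseWitness_apply_of_ne A hij, norm_phase]

variable [Fintype n]

theorem trace_phaseWitness_mul_self [DecidableEq n] {A : Matrix n n 𝕜} (hA : A.IsHermitian) :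
    (phaseWitness A * A).trace = (l1Coherence A : 𝕜) := by
  rw [trace_mul_eq_sum_offDiag (phaseWitness_apply_self A), l1Coherence, RCLike.ofReal_sum]
  refine Finset.sum_congr rfl fun p hp => ?_
  have hne : p.1 ≠ p.2 := (Finset.mem_offDiag.mp hp).2.2
  rw [phaseWitness_apply_of_ne A hne, ← hA.apply p.2 p.1, phase_mul_star]

theorem isGreatest_trace_mul_l1Coherence {ρ : Matrix n n 𝕜} (hρ : ρ.IsHermitian) :
    IsGreatest {x : ℝ | ∃ W : Matrix n n 𝕜,
      IsUnimodularWitness W ∧ (W * ρ).trace = (x : 𝕜)} (l1Coherence ρ) := by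
  classical
  refine ⟨⟨phaseWitness ρ, isUnimodularWitness_phaseWitness hρ,
    trace_phaseWitness_mul_self hρ⟩, ?_⟩
  rintro x ⟨W, ⟨-, hdiag, hoff⟩, hx⟩
  calc x ≤ ‖(x : 𝕜)‖ := by simpa only [RCLike.norm_ofReal] using le_abs_self x
    _ = ‖(W * ρ).trace‖ := by rw [hx]
    _ ≤ l1Coherence ρ :=
        norm_trace_mul_le_l1Coherence hdiag (fun i j hij => (hoff i j hij).le) ρ

theorem witnessed_coherence_eq_zero_iff_incoherent_general {ρ : Matrix n n 𝕜}
    (hρ : ρ.IsHermitian) :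
    sSup {x : ℝ | ∃ W : Matrix n n 𝕜,
        IsUnimodularWitness W ∧ (W * ρ).trace = (x : 𝕜)} = 0 ↔ ρ.IsDiag := by
  rw [(isGreatest_trace_mul_l1Coherence hρ).csSup_eq, l1Coherence_eq_zero_iff]

end Witness

/-- The supremum of `tr (W ρ)` over all normalized coherence witnesses `W`
equals `0` if and only if `ρ` is incoherent (diagonal). -/
theorem witnessed_coherence_eq_zero_iff_incoherent (d : ℕ)
    (ρ : Matrix (Fin d) (Fin d) ℂ) (hρ : IsDensityMatrix ρ) :
    sSup {x : ℝ | ∃ W : Matrix (Fin d) (Fin d) ℂ,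
        IsNormalizedWitness W ∧ (W * ρ).trace = (x : ℂ)} = 0 ↔
      IsIncoherent ρ := by
  exact witnessed_coherence_eq_zero_iff_incoherent_general hρ.1.isHermitian
end

section
/- Sufficiency of the matching condition: let ρ be a d×d density matrix and W a normalized coherence witness. If there exists an incoherent unitary U such that (U† W U)_{jk} = ρ_{jk}/|ρ_{jk}| for all j ≠ k with ρ_{jk} ≠ 0, then tr(W U ρ U†) = C_{l1}(ρ), i.e., the bound tr(W UρU†) ≤ C_{l1}(ρ) is attained. -/
open scoped ComplexOrder

/-- An incoherent unitary: a unitary matrix whose entries are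
`U i j = e^{iλ_j} δ_{i, f(j)}` for a permutation `f` and real phases `λ_j`. -/
def IsIncoherentUnitary {d : ℕ} (U : Matrix (Fin d) (Fin d) ℂ) : Prop :=
  U ∈ Matrix.unitaryGroup (Fin d) ℂ ∧
  ∃ (f : Equiv.Perm (Fin d)) (lam : Fin d → ℝ),
    ∀ i j, U i j = if i = f j then Complex.exp (Complex.I * lam j) else 0

/-!
By cyclicity, `tr (W U ρ U†) = tr (M ρ)` with `M = U† W U`. Each column of `U` has at most one
nonzero entry, so `M` inherits the vanishing diagonal of `W`, and only the terms `M_{jk} ρ_{kj}`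
with `j ≠ k` survive. As `ρ_{kj}` is the conjugate of `ρ_{jk}`, matching the phases of `M` and `ρ`
turns each of these terms into `|ρ_{jk}|`.
-/

theorem trace_mul_mul_mul_eq_trace_mul {m n R : Type*} [Fintype m] [Fintype n]
    [NonUnitalCommSemiring R] (W : Matrix m m R) (A : Matrix m n R) (X : Matrix n n R)
    (B : Matrix n m R) :
    (W * (A * X * B)).trace = (B * W * A * X).trace := by
  simpa only [Matrix.mul_assoc] using Matrix.trace_mul_cycle' W (A * X) B

theorem conjTranspose_mul_mul_apply_self_eq_zero {m n R : Type*} [Fintype m]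
    [NonUnitalNonAssocSemiring R] [StarAddMonoid R] {W : Matrix m m R} (hW : ∀ i, W i i = 0)
    {U : Matrix m n R} {j : n} (hU : (Function.support (U.col j)).Subsingleton) :
    (U.conjTranspose * W * U) j j = 0 := by
  have term_eq_zero (i k : m) : star (U i j) * W i k * U k j = 0 := by
    by_cases hi : U i j = 0
    · simp [hi]
    by_cases hk : U k j = 0
    · simp [hk]
    obtain rfl : i = k := hU hi hk
    simp [hW]
  simp only [Matrix.mul_apply, Matrix.conjTranspose_apply, Finset.sum_mul, term_eq_zero,
    Finset.sum_const_zero]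

theorem div_norm_mul_star_self {𝕜 : Type*} [RCLike 𝕜] (z : 𝕜) :
    z / (‖z‖ : 𝕜) * star z = ‖z‖ := by
  rw [div_mul_eq_mul_div, RCLike.star_def, RCLike.mul_conj, sq, mul_self_div_self]

theorem trace_mul_eq_sum_norm_of_matching {n 𝕜 : Type*} [Fintype n] [DecidableEq n] [RCLike 𝕜]
    {M ρ : Matrix n n 𝕜} (hρ : ρ.IsHermitian) (hM : ∀ j, M j j = 0)
    (hmatch : ∀ j k, j ≠ k → ρ j k ≠ 0 → M j k = ρ j k / (‖ρ j k‖ : 𝕜)) :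
    (M * ρ).trace = ((∑ j, ∑ k, if j = k then 0 else ‖ρ j k‖ : ℝ) : 𝕜) := by
  have term_eq (j k : n) : M j k * ρ k j = ((if j = k then 0 else ‖ρ j k‖ : ℝ) : 𝕜) := by
    rw [← hρ.apply k j]
    split_ifs with hjk
    · simp [← hjk, hM]
    by_cases h0 : ρ j k = 0
    · simp [h0]
    · rw [hmatch j k hjk h0, div_norm_mul_star_self]
  simp only [Matrix.trace, Matrix.diag_apply, Matrix.mul_apply, term_eq, RCLike.ofReal_sum]

theorem witness_mean_value_attained_of_matching_general {m n 𝕜 : Type*} [Fintype m] [Fintype n]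
    [DecidableEq n] [RCLike 𝕜] {ρ : Matrix n n 𝕜} (hρ : ρ.IsHermitian)
    {W : Matrix m m 𝕜} (hW : ∀ i, W i i = 0)
    {U : Matrix m n 𝕜} (hU : ∀ j, (Function.support (U.col j)).Subsingleton)
    (hmatch : ∀ j k, j ≠ k → ρ j k ≠ 0 →
      (U.conjTranspose * W * U) j k = ρ j k / (‖ρ j k‖ : 𝕜)) :
    (W * (U * ρ * U.conjTranspose)).trace =
      ((∑ j, ∑ k, if j = k then 0 else ‖ρ j k‖ : ℝ) : 𝕜) := by
  rw [trace_mul_mul_mul_eq_trace_mul]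
  exact trace_mul_eq_sum_norm_of_matching hρ
    (fun j ↦ conjTranspose_mul_mul_apply_self_eq_zero hW (hU j)) hmatch

theorem IsIncoherentUnitary.subsingleton_support_col {d : ℕ} {U : Matrix (Fin d) (Fin d) ℂ}
    (hU : IsIncoherentUnitary U) (j : Fin d) : (Function.support (U.col j)).Subsingleton := by
  obtain ⟨-, f, lam, hf⟩ := hU
  have eq_of_ne_zero (i : Fin d) (hi : U i j ≠ 0) : i = f j := by
    by_contra hne
    exact hi (by rw [hf, if_neg hne])
  exact fun i hi k hk ↦ (eq_of_ne_zero i hi).trans (eq_of_ne_zero k hk).symm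

/-- Sufficiency of the matching condition: if an incoherent unitary `U`
satisfies `(U† W U)_{jk} = ρ_{jk}/|ρ_{jk}|` for all `j ≠ k` with
`ρ_{jk} ≠ 0`, then `tr (W U ρ U†) = C_{l1}(ρ)`: the bound is attained. -/
theorem witness_mean_value_attained_of_matching (d : ℕ)
    (ρ : Matrix (Fin d) (Fin d) ℂ) (hρ : IsDensityMatrix ρ)
    (W : Matrix (Fin d) (Fin d) ℂ) (hW : IsNormalizedWitness W)
    (U : Matrix (Fin d) (Fin d) ℂ) (hU : IsIncoherentUnitary U)
    (hmatch : ∀ j k, j ≠ k → ρ j k ≠ 0 →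
      (U.conjTranspose * W * U) j k = ρ j k / (‖ρ j k‖ : ℂ)) :
    (W * (U * ρ * U.conjTranspose)).trace = (Cl1 ρ : ℂ) := by
  exact witness_mean_value_attained_of_matching_general hρ.1.isHermitian hW.2.1
    hU.subsingleton_support_col hmatch
end

section
/- Necessity of the matching condition: let ρ be a d×d density matrix and W a normalized coherence witness. If there exists an incoherent unitary U such that tr(W U ρ U†) = C_{l1}(ρ), then there exists a permutation f of the index set such that for all indices i, j, k with ρ_{ij} ≠ 0, ρ_{jk} ≠ 0 and ρ_{ik} ≠ 0, the phases multiply consistently: W_{f(i)f(j)} · W_{f(j)f(k)} · conj(W_{f(i)f(k)}) = (ρ_{ij} ρ_{jk} conj(ρ_{ik})) / |ρ_{ij} ρ_{jk} ρ_{ik}|. -/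
open scoped ComplexOrder

/-!
Moving the incoherent unitary `U` from `ρ` to the witness gives `tr (W U ρ U†) = tr (ρ V)` with
`V = U† W U`. The diagonal of `V` vanishes and its other entries are unimodular, so each term of
`∑ ρ i j * V j i` is bounded in modulus by the corresponding term of the `l₁`-norm of coherence.
Equality of the sums forces equality of the terms, which says, `V` being Hermitian, that `V i j` is
the phase of `ρ i j` wherever `i ≠ j` and `ρ i j ≠ 0`. The triple product
`V i j * V j k * conj (V i k)` does not see the phases of `U`, hence equals that of the permuted
entries of `W`.
-/

open Matrix

section RCLike

variable {ι 𝕜 : Type*} [RCLike 𝕜]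

theorem eq_ofReal_of_norm_le_of_sum_eq_sum_ofReal {s : Finset ι} {z : ι → 𝕜} {r : ι → ℝ}
    (hle : ∀ i ∈ s, ‖z i‖ ≤ r i) (hsum : ∑ i ∈ s, z i = ∑ i ∈ s, (r i : 𝕜)) :
    ∀ i ∈ s, z i = r i := by
  intro i hi
  have hre_le : ∀ j ∈ s, RCLike.re (z j) ≤ r j := fun j hj ↦ (RCLike.re_le_norm _).trans (hle j hj)
  have hre_sum : ∑ j ∈ s, RCLike.re (z j) = ∑ j ∈ s, r j := by
    simpa only [map_sum, RCLike.ofReal_re] using congrArg RCLike.re hsum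
  have hre : RCLike.re (z i) = r i := (Finset.sum_eq_sum_iff_of_le hre_le).1 hre_sum i hi
  have hnorm : RCLike.re (z i) = ‖z i‖ :=
    (RCLike.re_le_norm _).antisymm ((hle i hi).trans_eq hre.symm)
  rw [← hre, RCLike.re_eq_self_of_le hnorm.ge]

theorem conj_eq_div_norm_of_mul_eq_norm {z w : 𝕜} (hz : z ≠ 0) (h : z * w = (‖z‖ : 𝕜)) :
    starRingEnd 𝕜 w = z / ‖z‖ := by
  have hnorm : (‖z‖ : 𝕜) ≠ 0 := by simpa using hz
  have hconj : starRingEnd 𝕜 z * starRingEnd 𝕜 w = (‖z‖ : 𝕜) := by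
    rw [← map_mul, h, RCLike.conj_ofReal]
  refine (eq_div_iff hnorm).2 (mul_left_cancel₀ ((map_ne_zero (starRingEnd 𝕜)).2 hz) ?_)
  rw [← mul_assoc, hconj, RCLike.conj_mul, sq]

end RCLike

theorem trace_mul_mul_mul_cycle {l m n p R : Type*} [Fintype l] [Fintype m] [Fintype n]
    [Fintype p] [NonUnitalCommSemiring R] (A : Matrix l m R) (B : Matrix m n R)
    (C : Matrix n p R) (D : Matrix p l R) :
    (A * (B * C * D)).trace = (C * (D * A * B)).trace := by
  simpa only [Matrix.mul_assoc] using trace_mul_comm (A * B) (C * D)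

/-- The monomial matrix of a permutation `f` and weights `u`: its column `j` has the single entry
`u j`, in row `f j`. Incoherent unitaries are the monomial matrices with unimodular weights. -/
def monomialMatrix {n R : Type*} [DecidableEq n] [Zero R] (f : Equiv.Perm n) (u : n → R) :
    Matrix n n R :=
  of fun i j ↦ if i = f j then u j else 0

theorem conjTranspose_monomialMatrix_mul_mul_apply {n R : Type*} [Fintype n] [DecidableEq n]
    [NonUnitalNonAssocSemiring R] [StarRing R] (f : Equiv.Perm n) (u : n → R) (W : Matrix n n R)
    (i j : n) :
    ((monomialMatrix f u)ᴴ * W * monomialMatrix f u) i j = star (u i) * W (f i) (f j) * u j := by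
  simp [monomialMatrix, mul_apply, apply_ite]

theorem mul_mul_star_eq_of_eq_star_mul_mul {n R : Type*} [CommMonoid R] [StarMul R] {u : n → R}
    {V W : n → n → R} (hu : ∀ i, star (u i) * u i = 1)
    (hV : ∀ i j, V i j = star (u i) * W i j * u j) (i j k : n) :
    V i j * V j k * star (V i k) = W i j * W j k * star (W i k) := by
  simp only [hV, star_mul, star_star]
  calc
    _ = (star (u i) * u i) * (star (u j) * u j) * (star (u k) * u k) *
          (W i j * W j k * star (W i k)) := by ac_rfl
    _ = _ := by simp only [hu, one_mul]

/-- The `l₁`-norm of coherence `Cl1`, for an arbitrary finite index type and normed entries. -/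
noncomputable def offDiagL1Norm {n E : Type*} [Fintype n] [DecidableEq n] [Norm E]
    (A : Matrix n n E) : ℝ :=
  ∑ i, ∑ j, if i = j then 0 else ‖A i j‖

section Witness

variable {n 𝕜 : Type*} [Fintype n] [DecidableEq n] [RCLike 𝕜]

theorem mul_eq_norm_of_trace_mul_eq_offDiagL1Norm {A V : Matrix n n 𝕜} (hdiag : ∀ i, V i i = 0)
    (hle : ∀ i j, i ≠ j → ‖V i j‖ ≤ 1) (htrace : (A * V).trace = (offDiagL1Norm A : 𝕜))
    {i j : n} (hij : i ≠ j) : A i j * V j i = (‖A i j‖ : 𝕜) := by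
  have hterm_le : ∀ p ∈ (Finset.univ : Finset (n × n)),
      ‖A p.1 p.2 * V p.2 p.1‖ ≤ if p.1 = p.2 then 0 else ‖A p.1 p.2‖ := by
    rintro ⟨a, b⟩ -
    split_ifs with hab
    · obtain rfl : a = b := hab
      simp [hdiag]
    · rw [norm_mul]
      exact mul_le_of_le_one_right (norm_nonneg _) (hle b a (Ne.symm hab))
  have hsum : ∑ p : n × n, A p.1 p.2 * V p.2 p.1 =
      ∑ p : n × n, ((if p.1 = p.2 then 0 else ‖A p.1 p.2‖ : ℝ) : 𝕜) := by
    simpa only [Fintype.sum_prod_type, trace, diag_apply, mul_apply, offDiagL1Norm,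
      RCLike.ofReal_sum] using htrace
  simpa only [if_neg hij] using
    eq_ofReal_of_norm_le_of_sum_eq_sum_ofReal hterm_le hsum (i, j) (Finset.mem_univ _)

theorem eq_div_norm_of_trace_mul_eq_offDiagL1Norm {A V : Matrix n n 𝕜} (hV : V.IsHermitian)
    (hdiag : ∀ i, V i i = 0) (hle : ∀ i j, i ≠ j → ‖V i j‖ ≤ 1)
    (htrace : (A * V).trace = (offDiagL1Norm A : 𝕜)) {i j : n} (hij : i ≠ j) (hA : A i j ≠ 0) :
    V i j = A i j / ‖A i j‖ := by
  rw [← hV.apply i j]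
  exact conj_eq_div_norm_of_mul_eq_norm hA
    (mul_eq_norm_of_trace_mul_eq_offDiagL1Norm hdiag hle htrace hij)

theorem matching_condition_of_witness_mean_value_attained_general {ρ W : Matrix n n 𝕜}
    (hW : W.IsHermitian) (hdiag : ∀ i, W i i = 0) (hle : ∀ i j, i ≠ j → ‖W i j‖ ≤ 1)
    {f : Equiv.Perm n} {u : n → 𝕜} (hu : ∀ i, ‖u i‖ = 1)
    (hmean : (W * (monomialMatrix f u * ρ * (monomialMatrix f u)ᴴ)).trace =
      (offDiagL1Norm ρ : 𝕜))
    {i j k : n} (hij : i ≠ j) (hjk : j ≠ k) (hik : i ≠ k)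
    (hρij : ρ i j ≠ 0) (hρjk : ρ j k ≠ 0) (hρik : ρ i k ≠ 0) :
    W (f i) (f j) * W (f j) (f k) * starRingEnd 𝕜 (W (f i) (f k)) =
      ρ i j * ρ j k * starRingEnd 𝕜 (ρ i k) / (‖ρ i j * ρ j k * ρ i k‖ : 𝕜) := by
  let U := monomialMatrix f u
  let V := Uᴴ * W * U
  have hV_apply (a b : n) : V a b = star (u a) * W (f a) (f b) * u b :=
    conjTranspose_monomialMatrix_mul_mul_apply f u W a b
  have hV_diag (a : n) : V a a = 0 := by rw [hV_apply, hdiag, mul_zero, zero_mul]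
  have hV_le (a b : n) (hab : a ≠ b) : ‖V a b‖ ≤ 1 := by
    simpa only [hV_apply, norm_mul, norm_star, hu, one_mul, mul_one] using
      hle _ _ (f.injective.ne hab)
  have htrace : (ρ * V).trace = (offDiagL1Norm ρ : 𝕜) :=
    (trace_mul_mul_mul_cycle W U ρ Uᴴ).symm.trans hmean
  have hV_eq {a b : n} (hab : a ≠ b) (hρ : ρ a b ≠ 0) : V a b = ρ a b / ‖ρ a b‖ :=
    eq_div_norm_of_trace_mul_eq_offDiagL1Norm (isHermitian_conjTranspose_mul_mul U hW)
      hV_diag hV_le htrace hab hρ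
  calc
    _ = V i j * V j k * starRingEnd 𝕜 (V i k) :=
      (mul_mul_star_eq_of_eq_star_mul_mul (fun a ↦ by simp [RCLike.conj_mul, hu])
        hV_apply i j k).symm
    _ = _ := by
      rw [hV_eq hij hρij, hV_eq hjk hρjk, hV_eq hik hρik]
      simp only [map_div₀, RCLike.conj_ofReal, norm_mul, RCLike.ofReal_mul, div_mul_div_comm]

end Witness

/-- Necessity of the matching condition: if some incoherent unitary `U`
achieves `tr (W U ρ U†) = C_{l1}(ρ)`, then there is a permutation `f` of the
basis indices such that for all pairwise distinct `i, j, k` with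
`ρ_{ij} ≠ 0`, `ρ_{jk} ≠ 0`, `ρ_{ik} ≠ 0`, the phases of `W` and `ρ` multiply
consistently:
`W_{f(i)f(j)} W_{f(j)f(k)} conj (W_{f(i)f(k)})
  = ρ_{ij} ρ_{jk} conj (ρ_{ik}) / |ρ_{ij} ρ_{jk} ρ_{ik}|`. -/
theorem matching_condition_of_witness_mean_value_attained (d : ℕ)
    (ρ : Matrix (Fin d) (Fin d) ℂ) (hρ : IsDensityMatrix ρ)
    (W : Matrix (Fin d) (Fin d) ℂ) (hW : IsNormalizedWitness W)
    (U : Matrix (Fin d) (Fin d) ℂ) (hU : IsIncoherentUnitary U)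
    (hmean : (W * (U * ρ * U.conjTranspose)).trace = (Cl1 ρ : ℂ)) :
    ∃ f : Equiv.Perm (Fin d), ∀ i j k : Fin d,
      i ≠ j → j ≠ k → i ≠ k →
      ρ i j ≠ 0 → ρ j k ≠ 0 → ρ i k ≠ 0 →
      W (f i) (f j) * W (f j) (f k) * starRingEnd ℂ (W (f i) (f k)) =
        ρ i j * ρ j k * starRingEnd ℂ (ρ i k) /
          (‖ρ i j * ρ j k * ρ i k‖ : ℂ) := by
  obtain ⟨-, f, lam, hUf⟩ := hU
  obtain rfl : U = monomialMatrix f fun j ↦ Complex.exp (Complex.I * lam j) := Matrix.ext hUf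
  exact ⟨f, fun i j k ↦ matching_condition_of_witness_mean_value_attained_general hW.1 hW.2.1
    (fun i j hij ↦ (hW.2.2 i j hij).le) (fun j ↦ Complex.norm_exp_I_mul_ofReal _) hmean⟩
end

section
/- Qubit case: for every 2×2 density matrix ρ and every normalized coherence witness W (a Hermitian 2×2 matrix with zero diagonal whose off-diagonal entry has modulus 1), there exists a diagonal unitary U = diag(1, e^{iλ}) such that tr(W U ρ U†) = C_{l1}(ρ). -/
open scoped ComplexOrder

/-!
Conjugating `ρ` by `U = diag(1, e^{iλ})` multiplies the entry `ρ₁₀` by the phase `e^{iλ}`. Since `W`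
has zero diagonal, `tr (W U ρ U†)` is the sum of `e^{iλ} W₀₁ ρ₁₀` and its complex conjugate, so it
suffices to choose `λ` making this number equal to its modulus.
-/

theorem exists_exp_I_mul_mul_eq_norm (z : ℂ) :
    ∃ θ : ℝ, Complex.exp (Complex.I * θ) * z = ‖z‖ := by
  obtain ⟨c, hc, hcz⟩ := RCLike.exists_norm_eq_mul_self z
  obtain ⟨θ, rfl⟩ := (Complex.norm_eq_one_iff c).mp hc
  exact ⟨θ, by rw [mul_comm Complex.I]; exact hcz.symm⟩

theorem diagonal_mul_mul_conjTranspose_diagonal_apply {m n R : Type*}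
    [Fintype m] [DecidableEq m] [Fintype n] [DecidableEq n]
    [NonUnitalNonAssocSemiring R] [StarAddMonoid R]
    (v : m → R) (A : Matrix m n R) (w : n → R) (i : m) (j : n) :
    (Matrix.diagonal v * A * (Matrix.diagonal w).conjTranspose) i j =
      v i * A i j * star (w j) := by
  rw [Matrix.diagonal_conjTranspose, Matrix.mul_diagonal, Matrix.diagonal_mul, Pi.star_apply]

theorem trace_mul_fin_two_of_isHermitian_of_diag_eq_zero {R : Type*}
    [NonUnitalNonAssocCommSemiring R] [StarMul R]
    {W A : Matrix (Fin 2) (Fin 2) R} (hW : W.IsHermitian) (hW_diag : ∀ i, W i i = 0)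
    (hA : A.IsHermitian) :
    (W * A).trace = W 0 1 * A 1 0 + star (W 0 1 * A 1 0) := by
  rw [star_mul', hW.apply, hA.apply]
  simp [Matrix.trace_fin_two, Matrix.mul_apply, hW_diag]

theorem Cl1_fin_two_of_isHermitian {A : Matrix (Fin 2) (Fin 2) ℂ} (hA : A.IsHermitian) :
    Cl1 A = 2 * ‖A 1 0‖ := by
  have norm_symm : ‖A 0 1‖ = ‖A 1 0‖ := by rw [← hA.apply, norm_star]
  simp [Cl1, norm_symm, two_mul]

theorem qubit_witness_mean_value_attainable_general
    {ρ W : Matrix (Fin 2) (Fin 2) ℂ} (hρ : ρ.IsHermitian)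
    (hW : W.IsHermitian) (hW_diag : ∀ i, W i i = 0) :
    ∃ lam : ℝ,
      (W * (Matrix.diagonal ![(1 : ℂ), Complex.exp (Complex.I * lam)] * ρ *
        (Matrix.diagonal ![(1 : ℂ), Complex.exp (Complex.I * lam)]).conjTranspose)).trace
        = ((‖W 0 1‖ * Cl1 ρ : ℝ) : ℂ) := by
  obtain ⟨lam, h_phase⟩ := exists_exp_I_mul_mul_eq_norm (W 0 1 * ρ 1 0)
  refine ⟨lam, ?_⟩
  set U := Matrix.diagonal ![(1 : ℂ), Complex.exp (Complex.I * lam)] with hU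
  have h_entry : W 0 1 * (U * ρ * U.conjTranspose) 1 0 = (‖W 0 1 * ρ 1 0‖ : ℂ) := by
    rw [hU, diagonal_mul_mul_conjTranspose_diagonal_apply, ← h_phase]
    simp [mul_left_comm]
  have h_herm : (U * ρ * U.conjTranspose).IsHermitian :=
    Matrix.isHermitian_mul_mul_conjTranspose U hρ
  calc (W * (U * ρ * U.conjTranspose)).trace
      = (‖W 0 1 * ρ 1 0‖ : ℂ) + star (‖W 0 1 * ρ 1 0‖ : ℂ) := by
        rw [trace_mul_fin_two_of_isHermitian_of_diag_eq_zero hW hW_diag h_herm, h_entry]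
    _ = ((‖W 0 1‖ * (2 * ‖ρ 1 0‖) : ℝ) : ℂ) := by
        rw [norm_mul, Complex.star_def, Complex.conj_ofReal]
        push_cast
        ring
    _ = ((‖W 0 1‖ * Cl1 ρ : ℝ) : ℂ) := by rw [Cl1_fin_two_of_isHermitian hρ]

/-- Qubit case: for every 2×2 density matrix `ρ` and every normalized
coherence witness `W`, there is a diagonal unitary `U = diag(1, e^{iλ})`
such that `tr (W U ρ U†) = C_{l1}(ρ)`. -/
theorem qubit_witness_mean_value_attainable
    (ρ : Matrix (Fin 2) (Fin 2) ℂ) (hρ : IsDensityMatrix ρ)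
    (W : Matrix (Fin 2) (Fin 2) ℂ) (hW : IsNormalizedWitness W) :
    ∃ lam : ℝ,
      (W * (Matrix.diagonal ![(1 : ℂ), Complex.exp (Complex.I * lam)] * ρ *
        (Matrix.diagonal ![(1 : ℂ), Complex.exp (Complex.I * lam)]).conjTranspose)).trace
        = (Cl1 ρ : ℂ) := by
  simpa [hW.2.2 0 1 zero_ne_one] using
    qubit_witness_mean_value_attainable_general hρ.1.isHermitian hW.1 hW.2.1
end

section
/- Strict gap example: let θ ∈ (0, π/2), let ρ = |ψ⟩⟨ψ| with |ψ⟩ = (cosθ/√2)(|0⟩ + |1⟩) + sinθ|2⟩, and let W be the 3×3 Hermitian matrix with zero diagonal and entries W_{01} = W_{10} = 1, W_{12} = W_{21} = 1, W_{02} = i, W_{20} = −i. Then for every incoherent unitary U, tr(W U ρ U†) < C_{l1}(ρ) = cos²θ + √2·sin(2θ); i.e., the witnessed coherence cannot be attained by any incoherent unitary for this state and witness. -/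
open scoped ComplexOrder

/-!
If `W` has zero diagonal and entries of modulus at most `1`, the bound `Re tr (W σ) ≤ C_{l1}(σ)`
holds term by term, and equality forces every `W i j * σ j i` to be a nonnegative real. For a pure
state `σ = φφ†` with no vanishing amplitude the phases of `σ` cancel around a triangle,
`σ j i * σ k j * σ i k = |φ i|² |φ j|² |φ k|² > 0`, so equality would make `W i j * W j k * W k i`
nonnegative. For the witness of the example this product is `-i`. An incoherent unitary only
rephases and permutes the amplitudes, so it changes neither the coherence of a pure state nor its
full support.
-/

open Matrix

section Witness

variable {d : ℕ} {W ρ : Matrix (Fin d) (Fin d) ℂ}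

lemma re_trace_mul_lt_Cl1_of_not_nonneg (hdiag : ∀ i, W i i = 0) (hnorm : ∀ i j, ‖W i j‖ ≤ 1)
    {a b : Fin d} (hab : ¬0 ≤ W a b * ρ b a) : (W * ρ).trace.re < Cl1 ρ := by
  have hterm (i j : Fin d) : ‖W i j * ρ j i‖ ≤ if j = i then 0 else ‖ρ j i‖ := by
    split_ifs with hji
    · simp [hji, hdiag]
    · simpa only [norm_mul] using mul_le_of_le_one_left (norm_nonneg _) (hnorm i j)
  have hre_lt : (W a b * ρ b a).re < ‖W a b * ρ b a‖ :=
    (Complex.re_le_norm _).lt_of_ne (mt Complex.re_eq_norm.mp hab)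
  calc (W * ρ).trace.re = ∑ p : Fin d × Fin d, (W p.1 p.2 * ρ p.2 p.1).re := by
        simp only [trace, diag_apply, mul_apply, Complex.re_sum, Fintype.sum_prod_type]
    _ < ∑ p : Fin d × Fin d, if p.2 = p.1 then 0 else ‖ρ p.2 p.1‖ :=
        Finset.sum_lt_sum (fun p _ ↦ (Complex.re_le_norm _).trans (hterm p.1 p.2))
          ⟨(a, b), Finset.mem_univ _, hre_lt.trans_le (hterm a b)⟩
    _ = Cl1 ρ := by rw [Fintype.sum_prod_type_right, Cl1]

lemma re_trace_mul_lt_Cl1_of_triangle (hdiag : ∀ i, W i i = 0) (hnorm : ∀ i j, ‖W i j‖ ≤ 1)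
    {i j k : Fin d} (hρ : 0 < ρ j i * ρ k j * ρ i k) (hW : ¬0 ≤ W i j * W j k * W k i) :
    (W * ρ).trace.re < Cl1 ρ := by
  by_contra hle
  have hnonneg (a b : Fin d) : 0 ≤ W a b * ρ b a :=
    of_not_not fun hab ↦ hle (re_trace_mul_lt_Cl1_of_not_nonneg hdiag hnorm hab)
  refine hW (le_of_mul_le_mul_right ?_ hρ)
  calc 0 * (ρ j i * ρ k j * ρ i k) = 0 := zero_mul _
    _ ≤ W i j * ρ j i * (W j k * ρ k j) * (W k i * ρ i k) :=
        mul_nonneg (mul_nonneg (hnonneg i j) (hnonneg j k)) (hnonneg k i)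
    _ = W i j * W j k * W k i * (ρ j i * ρ k j * ρ i k) := by ring

end Witness

section PureState

variable {d : ℕ} {ψ : Fin d → ℂ}

lemma vecMulVec_star_triangle_pos (hψ : ∀ i, ψ i ≠ 0) (i j k : Fin d) :
    0 < vecMulVec ψ (star ψ) j i * vecMulVec ψ (star ψ) k j * vecMulVec ψ (star ψ) i k := by
  have hpos (a : Fin d) : 0 < ψ a * star (ψ a) := by
    simpa only [RCLike.star_def, Complex.mul_conj, Complex.zero_lt_real, Complex.normSq_pos]
      using hψ a
  calc 0 < ψ i * star (ψ i) * (ψ j * star (ψ j)) * (ψ k * star (ψ k)) :=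
        mul_pos (mul_pos (hpos i) (hpos j)) (hpos k)
    _ = _ := by simp only [vecMulVec_apply, Pi.star_apply]; ring

lemma Cl1_vecMulVec_star (ψ : Fin d → ℂ) :
    Cl1 (vecMulVec ψ (star ψ)) = (∑ i, ‖ψ i‖) ^ 2 - ∑ i, ‖ψ i‖ ^ 2 := by
  have hentry (i j : Fin d) : (if i = j then 0 else ‖vecMulVec ψ (star ψ) i j‖) =
      ‖ψ i‖ * ‖ψ j‖ - if i = j then ‖ψ i‖ * ‖ψ j‖ else 0 := by
    split_ifs <;> simp [vecMulVec_apply]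
  simp only [Cl1, hentry, Finset.sum_sub_distrib, Finset.sum_ite_eq, Finset.mem_univ, if_true, sq,
    Finset.sum_mul_sum]

end PureState

lemma mul_vecMulVec_star_mul_conjTranspose {m n R : Type*} [Fintype n] [NonUnitalSemiring R]
    [StarRing R] (A : Matrix m n R) (v : n → R) :
    A * vecMulVec v (star v) * Aᴴ = vecMulVec (A *ᵥ v) (star (A *ᵥ v)) := by
  rw [mul_vecMulVec, vecMulVec_mul, star_mulVec]

namespace IsIncoherentUnitary

variable {d : ℕ} {U : Matrix (Fin d) (Fin d) ℂ}

lemma exists_perm_norm_mulVec (hU : IsIncoherentUnitary U) :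
    ∃ f : Equiv.Perm (Fin d), ∀ ψ i, ‖(U *ᵥ ψ) i‖ = ‖ψ (f i)‖ := by
  obtain ⟨-, f, phase, hentry⟩ := hU
  refine ⟨f.symm, fun ψ i ↦ ?_⟩
  have hmulVec : (U *ᵥ ψ) i = Complex.exp (Complex.I * phase (f.symm i)) * ψ (f.symm i) := by
    simp only [mulVec, dotProduct, hentry, ← f.symm_apply_eq, ite_mul, zero_mul, Finset.sum_ite_eq,
      Finset.mem_univ, if_true]
  rw [hmulVec, norm_mul, mul_comm Complex.I, Complex.norm_exp_ofReal_mul_I, one_mul]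

lemma mulVec_ne_zero (hU : IsIncoherentUnitary U) {ψ : Fin d → ℂ} (hψ : ∀ i, ψ i ≠ 0)
    (i : Fin d) : (U *ᵥ ψ) i ≠ 0 := by
  obtain ⟨f, hf⟩ := hU.exists_perm_norm_mulVec
  rw [← norm_ne_zero_iff, hf, norm_ne_zero_iff]
  exact hψ (f i)

lemma Cl1_vecMulVec_mulVec (hU : IsIncoherentUnitary U) (ψ : Fin d → ℂ) :
    Cl1 (vecMulVec (U *ᵥ ψ) (star (U *ᵥ ψ))) = Cl1 (vecMulVec ψ (star ψ)) := by
  obtain ⟨f, hf⟩ := hU.exists_perm_norm_mulVec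
  simp only [Cl1_vecMulVec_star, hf, Equiv.sum_comp f fun i ↦ ‖ψ i‖,
    Equiv.sum_comp f fun i ↦ ‖ψ i‖ ^ 2]

theorem re_trace_mul_conj_lt_Cl1 (hU : IsIncoherentUnitary U)
    {W : Matrix (Fin d) (Fin d) ℂ} (hdiag : ∀ i, W i i = 0) (hnorm : ∀ i j, ‖W i j‖ ≤ 1)
    {i j k : Fin d} (hW : ¬0 ≤ W i j * W j k * W k i) {ψ : Fin d → ℂ} (hψ : ∀ i, ψ i ≠ 0) :
    (W * (U * vecMulVec ψ (star ψ) * Uᴴ)).trace.re < Cl1 (vecMulVec ψ (star ψ)) := by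
  rw [mul_vecMulVec_star_mul_conjTranspose, ← hU.Cl1_vecMulVec_mulVec]
  exact re_trace_mul_lt_Cl1_of_triangle hdiag hnorm
    (vecMulVec_star_triangle_pos (hU.mulVec_ne_zero hψ) i j k) hW

end IsIncoherentUnitary

/-- The state vector `(cos θ / √2)(|0⟩ + |1⟩) + sin θ |2⟩` of the example. -/
noncomputable def gapState (θ : ℝ) : Fin 3 → ℂ :=
  ![((Real.cos θ / √2 : ℝ) : ℂ), ((Real.cos θ / √2 : ℝ) : ℂ), ((Real.sin θ : ℝ) : ℂ)]

/-- The coherence witness of the example; its entries have product `-i` around the triangle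
`0 → 1 → 2 → 0`. -/
def gapWitness : Matrix (Fin 3) (Fin 3) ℂ :=
  !![0, 1, Complex.I; 1, 0, 1; -Complex.I, 1, 0]

lemma gapState_ne_zero {θ : ℝ} (hθ : Real.sin (2 * θ) ≠ 0) (i : Fin 3) : gapState θ i ≠ 0 := by
  have hsin_cos : Real.sin θ ≠ 0 ∧ Real.cos θ ≠ 0 := by
    simpa [Real.sin_two_mul] using hθ
  have hcos_div : Real.cos θ / √2 ≠ 0 := div_ne_zero hsin_cos.2 (by positivity)
  fin_cases i
  exacts [Complex.ofReal_ne_zero.mpr hcos_div, Complex.ofReal_ne_zero.mpr hcos_div,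
    Complex.ofReal_ne_zero.mpr hsin_cos.1]

lemma norm_gapState (θ : ℝ) (i : Fin 3) :
    ‖gapState θ i‖ = ![|Real.cos θ| / √2, |Real.cos θ| / √2, |Real.sin θ|] i := by
  have hcos_div : |Real.cos θ / √2| = |Real.cos θ| / √2 := by
    rw [abs_div, abs_of_nonneg (Real.sqrt_nonneg 2)]
  fin_cases i
  exacts [(Complex.norm_real _).trans hcos_div, (Complex.norm_real _).trans hcos_div,
    Complex.norm_real _]

lemma Cl1_gapState (θ : ℝ) :
    Cl1 (vecMulVec (gapState θ) (star (gapState θ))) =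
      Real.cos θ ^ 2 + √2 * |Real.sin (2 * θ)| := by
  have hsqrt : √2 ^ 2 = 2 := Real.sq_sqrt zero_le_two
  calc Cl1 (vecMulVec (gapState θ) (star (gapState θ)))
      = (|Real.cos θ| / √2 + |Real.cos θ| / √2 + |Real.sin θ|) ^ 2 -
          ((|Real.cos θ| / √2) ^ 2 + (|Real.cos θ| / √2) ^ 2 + |Real.sin θ| ^ 2) := by
        simp only [Cl1_vecMulVec_star, norm_gapState, Fin.sum_univ_three]
        rfl
    _ = |Real.cos θ| ^ 2 + √2 * (2 * |Real.sin θ| * |Real.cos θ|) := by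
        field_simp
        linear_combination
          -(|Real.cos θ| ^ 2 + 2 * √2 * |Real.sin θ| * |Real.cos θ|) * hsqrt
    _ = Real.cos θ ^ 2 + √2 * |Real.sin (2 * θ)| := by
        rw [Real.sin_two_mul, abs_mul, abs_mul, abs_two, sq_abs]

lemma gapWitness_diag (i : Fin 3) : gapWitness i i = 0 := by
  fin_cases i <;> rfl

lemma norm_gapWitness_le_one (i j : Fin 3) : ‖gapWitness i j‖ ≤ 1 := by
  fin_cases i <;> fin_cases j <;> simp [gapWitness]

lemma gapWitness_triangle_not_nonneg :
    ¬0 ≤ gapWitness 0 1 * gapWitness 1 2 * gapWitness 2 0 := by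
  simp [gapWitness, Complex.le_def]

theorem strict_gap_example_general {θ : ℝ} (hθ : Real.sin (2 * θ) ≠ 0)
    {U : Matrix (Fin 3) (Fin 3) ℂ} (hU : IsIncoherentUnitary U) :
    (gapWitness * (U * vecMulVec (gapState θ) (star (gapState θ)) * Uᴴ)).trace.re <
        Cl1 (vecMulVec (gapState θ) (star (gapState θ))) ∧
      Cl1 (vecMulVec (gapState θ) (star (gapState θ))) =
        Real.cos θ ^ 2 + √2 * |Real.sin (2 * θ)| :=
  ⟨hU.re_trace_mul_conj_lt_Cl1 gapWitness_diag norm_gapWitness_le_one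
    gapWitness_triangle_not_nonneg (gapState_ne_zero hθ), Cl1_gapState θ⟩

/-- Strict gap example: for `θ ∈ (0, π/2)`, the pure qutrit state
`ρ = |ψ⟩⟨ψ|` with `|ψ⟩ = (cos θ/√2)(|0⟩+|1⟩) + sin θ |2⟩` and the witness
`W` with zero diagonal, `W₀₁ = W₁₀ = 1`, `W₁₂ = W₂₁ = 1`, `W₀₂ = i`,
`W₂₀ = −i`, satisfy `tr (W U ρ U†) < C_{l1}(ρ) = cos²θ + √2 sin(2θ)` for
every incoherent unitary `U`. -/
theorem strict_gap_example (θ : ℝ) (hθ : θ ∈ Set.Ioo 0 (Real.pi / 2))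
    (ψ : Fin 3 → ℂ)
    (hψ : ψ = ![((Real.cos θ / Real.sqrt 2 : ℝ) : ℂ),
               ((Real.cos θ / Real.sqrt 2 : ℝ) : ℂ),
               ((Real.sin θ : ℝ) : ℂ)])
    (ρ : Matrix (Fin 3) (Fin 3) ℂ)
    (hρ : ∀ j k, ρ j k = ψ j * starRingEnd ℂ (ψ k))
    (W : Matrix (Fin 3) (Fin 3) ℂ)
    (hW : W = !![0, 1, Complex.I; 1, 0, 1; -Complex.I, 1, 0])
    (U : Matrix (Fin 3) (Fin 3) ℂ) (hU : IsIncoherentUnitary U) :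
    ((W * (U * ρ * U.conjTranspose)).trace).re < Cl1 ρ ∧
      Cl1 ρ = Real.cos θ ^ 2 + Real.sqrt 2 * Real.sin (2 * θ) := by
  obtain rfl : ψ = gapState θ := hψ
  obtain rfl : W = gapWitness := hW
  obtain rfl : ρ = vecMulVec (gapState θ) (star (gapState θ)) := Matrix.ext hρ
  have hsin : 0 < Real.sin (2 * θ) :=
    Real.sin_pos_of_mem_Ioo ⟨by linarith [hθ.1], by linarith [hθ.2]⟩
  simpa only [abs_of_pos hsin] using strict_gap_example_general hsin.ne' hU
end
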